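/- Let R be a monotone transit function on a finite nonempty set V satisfying axiom (n3o). Then R satisfies both axiom (w) and axiom (wp). -/

import Mathlib

/-!
By (n3o) no three transit sets overlap pairwise. Three pairwise intersecting sets overlap pairwise
as soon as each of them has a private point, or as soon as each pair shares a point missing from
the third set. Excluding the first configuration is (wp); excluding the second makes the transit
sets a weak hierarchy, and for `R x y`, `R x z`, `R y z` the shared points are `x`, `y`, `z`, which
gives (w).
-/

namespace TransitPaper

variable {V : Type*}

/-- Transit function axioms (t1), (t2), (t3). -/
def IsTransit (R : V → V → Set V) : Prop :=
  (∀ u v, u ∈ R u v) ∧ (∀ u v, R u v = R v u) ∧ (∀ u : V, R u u = {u})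

/-- Monotonicity axiom (m). -/
def IsMonotone (R : V → V → Set V) : Prop :=
  ∀ u v p q, p ∈ R u v → q ∈ R u v → R p q ⊆ R u v

/-- Two sets overlap: A ∩ B, A \ B, B \ A all nonempty. -/
def Ovl (A B : Set V) : Prop :=
  (A ∩ B).Nonempty ∧ (A \ B).Nonempty ∧ (B \ A).Nonempty

/-- The system of transit sets 𝒞_R. -/
def transitSets (R : V → V → Set V) : Set (Set V) :=
  {S | ∃ x y, S = R x y}

/-- S is an interval with respect to the order `lt`. -/
def IsIntervalWrt (lt : V → V → Prop) (S : Set V) : Prop :=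
  ∀ x ∈ S, ∀ y ∈ S, ∀ w, lt x w → lt w y → w ∈ S

/-- R is pyramidal: monotone and there is a total order making all transit sets intervals. -/
def IsPyramidal (R : V → V → Set V) : Prop :=
  IsMonotone R ∧ ∃ lt : V → V → Prop, IsStrictTotalOrder V lt ∧
    ∀ u v, IsIntervalWrt lt (R u v)

def AxUC (R : V → V → Set V) : Prop :=
  ∀ x y u v : V, (R x y ∩ R u v).Nonempty →
    ∃ p ∈ R x y ∪ R u v, ∃ q ∈ R x y ∪ R u v, R x y ∪ R u v = R p q

def AxU (R : V → V → Set V) : Prop :=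
  ∀ u v z : V, z ∈ R u v → R u v = R u z ∪ R z v

def AxW (R : V → V → Set V) : Prop :=
  ∀ x y z : V, z ∈ R x y ∨ y ∈ R x z ∨ x ∈ R y z

def AxWP (R : V → V → Set V) : Prop :=
  ∀ u v x y p q : V, (R u v ∩ R x y).Nonempty → (R u v ∩ R p q).Nonempty →
    (R x y ∩ R p q).Nonempty →
    R p q ⊆ R u v ∪ R x y ∨ R u v ⊆ R p q ∪ R x y ∨ R x y ⊆ R p q ∪ R u v

def AxI (R : V → V → Set V) : Prop :=
  ∀ x y u v p q : V, (R x y ∩ R u v).Nonempty → R x y ∩ R u v ⊆ R p q →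
    (R p q \ (R x y ∪ R u v)).Nonempty → R x y ⊆ R p q ∨ R u v ⊆ R p q

def AxO' (R : V → V → Set V) : Prop :=
  ∀ u v : V, ∀ z ∈ R u v, ∃ p ∈ R u v, ∃ q ∈ R u v, R p z ∪ R z q = R u v

def AxL1 (R : V → V → Set V) : Prop :=
  ∀ x y p q u v : V, Ovl (R x y) (R p q) → Ovl (R p q) (R u v) →
    R x y ⊆ R u v ∨ R u v ⊆ R x y ∨
      (R x y ∩ R u v ⊆ R p q ∧ R p q ⊆ R x y ∪ R u v)

def AxL2 (R : V → V → Set V) : Prop :=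
  ∀ x y p q u v : V, Ovl (R x y) (R p q) → Ovl (R p q) (R u v) →
    R x y ∩ R u v = ∅ →
    ∃ s ∈ R x y \ R p q, ∃ t ∈ R u v \ R p q,
      R x y ∪ R p q ∪ R u v = R s t

def AxN3O (R : V → V → Set V) : Prop :=
  ∀ x y p q u v : V, Ovl (R x y) (R p q) → Ovl (R p q) (R u v) →
    R x y ⊆ R u v ∨ R u v ⊆ R x y ∨ R x y ∩ R u v = ∅

def AxU3 (R : V → V → Set V) : Prop :=
  ∀ x y : V, ¬ R x y ⊆ {x, y} →
    ∃ z ∈ R x y, z ≠ x ∧ z ≠ y ∧ R x z ∪ R z y = R x y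

def AxB3 (R : V → V → Set V) : Prop :=
  ∀ u v x y : V, x ∈ R u v → y ∈ R u x → x ∈ R y v

def AxB4 (R : V → V → Set V) : Prop :=
  ∀ u v x : V, x ∈ R u v → R u x ∩ R x v = {x}

def AxTB (R : V → V → Set V) : Prop :=
  ∀ W : Finset V, 3 ≤ W.card →
    ∃ x ∈ W, ∀ u ∈ W, ∀ v ∈ W, R x u ⊆ R x v ∨ R x v ⊆ R x u

def AxHC (R : V → V → Set V) : Prop :=
  ∀ W : Finset V, 3 ≤ W.card →
    ∃ x ∈ W, ∃ y ∈ W, x ≠ y ∧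
      ∀ u ∈ W, ∀ v ∈ W,
        (R x u ⊆ R x v ∨ R x v ⊆ R x u) ∧ (R y u ⊆ R y v ∨ R y v ⊆ R y u)

def AxTB' (R : V → V → Set V) : Prop :=
  ∀ n : ℕ, 3 ≤ n → ∀ v : ZMod n → V,
    (∀ k : ZMod n, v (k - 1) ∉ R (v k) (v (k + 1)) ∧
      v (k + 1) ∉ R (v (k - 1)) (v k)) →
    ∃ j i : ZMod n, i ≠ j ∧ i ≠ j - 1 ∧ v j ∈ R (v i) (v (i + 1))

def AxP2 (R : V → V → Set V) : Prop :=
  ∀ x y u v p q s t : V,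
    Ovl (R x y) (R s t) → Ovl (R u v) (R s t) → Ovl (R p q) (R s t) →
    R x y ⊆ R u v ∪ R p q ∪ R s t ∨ R u v ⊆ R x y ∪ R p q ∪ R s t ∨
      R p q ⊆ R x y ∪ R u v ∪ R s t

def AxP3 (R : V → V → Set V) : Prop :=
  ∀ x y u v p q s t : V,
    Ovl (R x y) (R u v) → Ovl (R x y) (R p q) → Ovl (R x y) (R s t) →
    R p q ⊆ R u v → R s t ⊆ R u v → (R p q ∩ R s t).Nonempty

def AxP4 (R : V → V → Set V) : Prop :=
  ∀ n : ℕ, 3 ≤ n → ∀ (u v y : V) (x : ℕ → V),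
    (∀ i j : ℕ, 1 ≤ i → i ≤ n → 1 ≤ j → j + 1 ≤ n → j ≠ i - 1 → j ≠ i →
      x i ∉ R (x j) (x (j + 1))) →
    (R u v ∩ R (x 1) (x 2)).Nonempty →
    (R u v ∩ R (x (n - 1)) (x n)).Nonempty →
    (∀ i : ℕ, 1 ≤ i → i + 1 ≤ n → y ∈ R u v \ R (x i) (x (i + 1))) →
    R (x 1) (x 2) ⊆ R u v ∨ R (x (n - 1)) (x n) ⊆ R u v

/-- A weak β-cycle in a set system 𝒞. -/
def HasWeakBetaCycle (𝒞 : Set (Set V)) : Prop :=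
  ∃ n : ℕ, 3 ≤ n ∧ ∃ (C : ZMod n → Set V) (x : ZMod n → V),
    (∀ i, C i ∈ 𝒞) ∧ (∀ i, x i ∈ C i ∧ x i ∈ C (i + 1)) ∧
    (∀ i k : ZMod n, k ≠ i → k ≠ i + 1 → x i ∉ C k)

def TotallyBalanced (𝒞 : Set (Set V)) : Prop := ¬ HasWeakBetaCycle 𝒞

/-- A pure cycle: a weak β-cycle with nonconsecutive sets disjoint. -/
def HasPureCycle (𝒞 : Set (Set V)) : Prop :=
  ∃ n : ℕ, 3 ≤ n ∧ ∃ (C : ZMod n → Set V) (x : ZMod n → V),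
    (∀ i, C i ∈ 𝒞) ∧ (∀ i, x i ∈ C i ∧ x i ∈ C (i + 1)) ∧
    (∀ i k : ZMod n, k ≠ i → k ≠ i + 1 → x i ∉ C k) ∧
    (∀ i j : ZMod n, j ≠ i - 1 → j ≠ i → j ≠ i + 1 → C i ∩ C j = ∅)

def HasGammaTriangle (𝒞 : Set (Set V)) : Prop :=
  ∃ C₁ C₂ C₃ : Set V, C₁ ∈ 𝒞 ∧ C₂ ∈ 𝒞 ∧ C₃ ∈ 𝒞 ∧
    (C₁ ∩ C₂).Nonempty ∧ (C₁ ∩ C₃).Nonempty ∧ (C₂ ∩ C₃).Nonempty ∧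
    ∃ u ∈ C₃, ∃ w ∈ C₃, u ∈ C₁ \ C₂ ∧ w ∈ C₂ \ C₁

def GammaAcyclic (𝒞 : Set (Set V)) : Prop :=
  ¬ HasPureCycle 𝒞 ∧ ¬ HasGammaTriangle 𝒞

def IsHierarchy (𝒞 : Set (Set V)) : Prop :=
  Set.univ ∈ 𝒞 ∧ (∀ x : V, {x} ∈ 𝒞) ∧
    ∀ A ∈ 𝒞, ∀ B ∈ 𝒞, A ∩ B = A ∨ A ∩ B = B ∨ A ∩ B = ∅

def WeakHierarchy (𝒞 : Set (Set V)) : Prop :=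
  ∀ A ∈ 𝒞, ∀ B ∈ 𝒞, ∀ C ∈ 𝒞,
    A ∩ B ∩ C = A ∩ B ∨ A ∩ B ∩ C = A ∩ C ∨ A ∩ B ∩ C = B ∩ C

def AxWPSet (𝒞 : Set (Set V)) : Prop :=
  ∀ A ∈ 𝒞, ∀ B ∈ 𝒞, ∀ C ∈ 𝒞,
    (A ∩ B).Nonempty → (A ∩ C).Nonempty → (B ∩ C).Nonempty →
    A ⊆ B ∪ C ∨ B ⊆ A ∪ C ∨ C ⊆ A ∪ B

def AxISet (𝒞 : Set (Set V)) : Prop :=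
  ∀ A ∈ 𝒞, ∀ B ∈ 𝒞, ∀ C ∈ 𝒞,
    (A ∩ B).Nonempty → A ∩ B ⊆ C → (C \ (A ∪ B)).Nonempty →
    A ⊆ C ∨ B ⊆ C

def AxL1Set (𝒞 : Set (Set V)) : Prop :=
  ∀ A ∈ 𝒞, ∀ B ∈ 𝒞, ∀ C ∈ 𝒞, Ovl A B → Ovl B C →
    A ⊆ C ∨ C ⊆ A ∨ (A ∩ C ⊆ B ∧ B ⊆ A ∪ C)

def AxN3OSet (𝒞 : Set (Set V)) : Prop :=
  ∀ A ∈ 𝒞, ∀ B ∈ 𝒞, ∀ C ∈ 𝒞, Ovl A B → Ovl B C → ¬ Ovl A C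

def AxL2'Set (𝒞 : Set (Set V)) : Prop :=
  ∀ A ∈ 𝒞, ∀ B ∈ 𝒞, ∀ C ∈ 𝒞, Ovl A B → Ovl B C → A ∩ C = ∅ →
    A ∪ B ∪ C ∈ 𝒞

def AxL2''Set (𝒞 : Set (Set V)) : Prop :=
  ∀ A ∈ 𝒞, ∀ B ∈ 𝒞, ∀ C ∈ 𝒞, ∀ D ∈ 𝒞, Ovl A B → Ovl B C → A ∩ C = ∅ →
    (A ∪ C) \ B ⊆ D → A ∪ B ∪ C ⊆ D

section

variable {R : V → V → Set V} {𝒞 : Set (Set V)}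

theorem not_ovl_iff {A B : Set V} : ¬ Ovl A B ↔ A ⊆ B ∨ B ⊆ A ∨ A ∩ B = ∅ := by
  simp only [Ovl, Set.sdiff_nonempty, ← Set.not_nonempty_iff_eq_empty]
  tauto

theorem axN3OSet_transitSets_iff : AxN3OSet (transitSets R) ↔ AxN3O R := by
  constructor
  · intro h x y p q u v h₁ h₂
    exact not_ovl_iff.1 (h _ ⟨x, y, rfl⟩ _ ⟨p, q, rfl⟩ _ ⟨u, v, rfl⟩ h₁ h₂)
  · rintro h _ ⟨x, y, rfl⟩ _ ⟨p, q, rfl⟩ _ ⟨u, v, rfl⟩ h₁ h₂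
    exact not_ovl_iff.2 (h x y p q u v h₁ h₂)

theorem weakHierarchy_iff_inter_subset :
    WeakHierarchy 𝒞 ↔
      ∀ A ∈ 𝒞, ∀ B ∈ 𝒞, ∀ C ∈ 𝒞, A ∩ B ⊆ C ∨ A ∩ C ⊆ B ∨ B ∩ C ⊆ A := by
  have inter_eq_iff (A B C : Set V) :
      (A ∩ B ∩ C = A ∩ B ∨ A ∩ B ∩ C = A ∩ C ∨ A ∩ B ∩ C = B ∩ C) ↔
        (A ∩ B ⊆ C ∨ A ∩ C ⊆ B ∨ B ∩ C ⊆ A) := by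
    rw [Set.inter_eq_left, Set.inter_right_comm, Set.inter_eq_left, Set.inter_right_comm,
      Set.inter_assoc, Set.inter_eq_right]
  simp only [WeakHierarchy, inter_eq_iff]

theorem AxN3OSet.weakHierarchy (h : AxN3OSet 𝒞) : WeakHierarchy 𝒞 := by
  rw [weakHierarchy_iff_inter_subset]
  intro A hA B hB C hC
  by_contra! hc
  simp only [Set.not_subset] at hc
  obtain ⟨⟨x, ⟨hxA, hxB⟩, hxC⟩, ⟨y, ⟨hyA, hyC⟩, hyB⟩, ⟨z, ⟨hzB, hzC⟩, hzA⟩⟩ := hc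
  have hAB : Ovl A B := ⟨⟨x, hxA, hxB⟩, ⟨y, hyA, hyB⟩, ⟨z, hzB, hzA⟩⟩
  have hBC : Ovl B C := ⟨⟨z, hzB, hzC⟩, ⟨x, hxB, hxC⟩, ⟨y, hyC, hyB⟩⟩
  have hAC : Ovl A C := ⟨⟨y, hyA, hyC⟩, ⟨x, hxA, hxC⟩, ⟨z, hzC, hzA⟩⟩
  exact h A hA B hB C hC hAB hBC hAC

theorem WeakHierarchy.axW (h : WeakHierarchy (transitSets R)) (left_mem : ∀ u v, u ∈ R u v)
    (right_mem : ∀ u v, v ∈ R u v) : AxW R := by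
  intro x y z
  rcases weakHierarchy_iff_inter_subset.1 h _ ⟨x, y, rfl⟩ _ ⟨x, z, rfl⟩ _ ⟨y, z, rfl⟩ with
    hs | hs | hs
  · exact Or.inr (Or.inr (hs ⟨left_mem x y, left_mem x z⟩))
  · exact Or.inr (Or.inl (hs ⟨right_mem x y, left_mem y z⟩))
  · exact Or.inl (hs ⟨right_mem x z, right_mem y z⟩)

theorem AxN3OSet.axWPSet (h : AxN3OSet 𝒞) : AxWPSet 𝒞 := by
  intro A hA B hB C hC hAB hAC hBC
  by_contra! hc
  simp only [Set.not_subset, Set.mem_union, not_or] at hc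
  obtain ⟨⟨a, haA, haB, haC⟩, ⟨b, hbB, hbA, hbC⟩, ⟨c, hcC, hcA, hcB⟩⟩ := hc
  exact h A hA B hB C hC ⟨hAB, ⟨a, haA, haB⟩, ⟨b, hbB, hbA⟩⟩
    ⟨hBC, ⟨b, hbB, hbC⟩, ⟨c, hcC, hcB⟩⟩ ⟨hAC, ⟨a, haA, haC⟩, ⟨c, hcC, hcA⟩⟩

theorem AxWPSet.axWP (h : AxWPSet (transitSets R)) : AxWP R := by
  intro u v x y p q hux hup hxp
  rw [Set.union_comm (R p q) (R x y), Set.union_comm (R p q) (R u v), or_rotate]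
  exact h _ ⟨u, v, rfl⟩ _ ⟨x, y, rfl⟩ _ ⟨p, q, rfl⟩ hux hup hxp

theorem stmt_14_general (left_mem : ∀ u v, u ∈ R u v) (right_mem : ∀ u v, v ∈ R u v)
    (hn3o : AxN3O R) : AxW R ∧ AxWP R := by
  have h : AxN3OSet (transitSets R) := axN3OSet_transitSets_iff.2 hn3o
  exact ⟨h.weakHierarchy.axW left_mem right_mem, h.axWPSet.axWP⟩

end

/-- A monotone transit function satisfying (n3o) satisfies (w)
and (wp). -/
theorem stmt_14 {V : Type*} [Fintype V] [Nonempty V] (R : V → V → Set V)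
    (htf : IsTransit R) (hm : IsMonotone R) (hn3o : AxN3O R) :
    AxW R ∧ AxWP R := by
  obtain ⟨left_mem, symm, -⟩ := htf
  exact stmt_14_general left_mem (fun u v => symm v u ▸ left_mem v u) hn3o

end TransitPaper
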